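/- Let φ : ℝ → ℝ be defined by φ(x) = (1+x²)^{-1}. Then for every n ∈ ℕ there exist real coefficients a⁰ₙ, a¹ₙ, …, aⁿₙ (written a_k^n for 0 ≤ k ≤ n) such that the n-th derivative satisfies φ^{(n)}(x) = (1+x²)^{-(n+1)} Σ_{k=0}^n a_k^n x^k for all x ∈ ℝ, with |a_k^n| ≤ 4ⁿ (n+2)! for all 0 ≤ k ≤ n, and a_k^n = 0 whenever n + k is odd. -/

import Mathlib

/-!
Write `φ^{(n)}(x) = P_n(x) / (1 + x²)^{n+1}`. The quotient rule gives `P_0 = 1` and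
`P_{n+1} = (1 + X²) P_n' - 2(n+1) X P_n`, so on coefficients
`a_k^{n+1} = (k+1) a_{k+1}^n + (k-1-2(n+1)) a_{k-1}^n`.
Only indices of parity opposite to `k` enter, which propagates the vanishing for `n + k` odd.
For `k ≤ n + 1` the two multipliers have absolute values adding up to `2n + 4 ≤ 4 (n + 3)`, which
propagates the bound `4ⁿ (n+2)!`.
-/

open Polynomial in
/-- The numerator `P_{n+1}` produced from `P = P_n` by the quotient rule. -/
noncomputable def nextNumerator (n : ℕ) (P : ℝ[X]) : ℝ[X] :=
  derivative P + X * (X * derivative P) - C (2 * ((n : ℝ) + 1)) * (X * P)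

open Polynomial in
theorem coeff_X_mul_derivative (P : ℝ[X]) (k : ℕ) :
    (X * derivative P).coeff k = k * P.coeff k := by
  cases k with
  | zero => simp
  | succ k => rw [coeff_X_mul, coeff_derivative]; push_cast; ring

theorem coeff_nextNumerator_zero (n : ℕ) (P : Polynomial ℝ) :
    (nextNumerator n P).coeff 0 = P.coeff 1 := by
  simp [nextNumerator, Polynomial.coeff_derivative]

theorem coeff_nextNumerator_succ (n k : ℕ) (P : Polynomial ℝ) :
    (nextNumerator n P).coeff (k + 1) =
      (k + 2) * P.coeff (k + 2) + ((k : ℝ) - 2 * (n + 1)) * P.coeff k := by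
  rw [nextNumerator, Polynomial.coeff_sub, Polynomial.coeff_add, Polynomial.coeff_C_mul,
    Polynomial.coeff_X_mul, Polynomial.coeff_X_mul, coeff_X_mul_derivative,
    Polynomial.coeff_derivative]
  push_cast
  ring

theorem hasDerivAt_div_one_add_sq_pow (n : ℕ) (P : Polynomial ℝ) (x : ℝ) :
    HasDerivAt (fun z : ℝ => ((1 + z ^ 2) ^ (n + 1))⁻¹ * P.eval z)
      (((1 + x ^ 2) ^ (n + 2))⁻¹ * (nextNumerator n P).eval x) x := by
  have hpos : (1 + x ^ 2 : ℝ) ≠ 0 := by positivity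
  have h1 : HasDerivAt (fun z : ℝ => 1 + z ^ 2) (2 * x) x := by
    simpa using (hasDerivAt_pow 2 x).const_add 1
  refine (((h1.fun_pow (n + 1)).fun_inv (pow_ne_zero _ hpos)).fun_mul
    (P.hasDerivAt x)).congr_deriv ?_
  simp only [nextNumerator, Polynomial.eval_sub, Polynomial.eval_add, Polynomial.eval_mul,
    Polynomial.eval_X, Polynomial.eval_C, Nat.add_sub_cancel]
  push_cast
  field_simp
  ring

/-- The induction behind the theorem, with the numerator kept as a polynomial. The bound and the
parity statement range over all `k`; beyond the degree they hold trivially. -/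
theorem exists_numerator (n : ℕ) :
    ∃ P : Polynomial ℝ,
      (∀ x : ℝ, iteratedDeriv n (fun z : ℝ => (1 + z ^ 2)⁻¹) x =
        ((1 + x ^ 2) ^ (n + 1))⁻¹ * P.eval x) ∧
      (∀ k, n < k → P.coeff k = 0) ∧
      (∀ k, |P.coeff k| ≤ 4 ^ n * (Nat.factorial (n + 2) : ℝ)) ∧
      (∀ k, Odd (n + k) → P.coeff k = 0) := by
  induction n with
  | zero =>
    refine ⟨1, by simp, ?_, ?_, ?_⟩
    · intro k hk
      simp [Polynomial.coeff_one, hk.ne']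
    · intro k
      rw [Polynomial.coeff_one]
      split_ifs <;> norm_num [Nat.factorial]
    · intro k hk
      have : k ≠ 0 := by rintro rfl; simp at hk
      simp [Polynomial.coeff_one, this]
  | succ n ih =>
    obtain ⟨P, hP, hdeg, hbd, hodd⟩ := ih
    have hdeg' : ∀ k, n + 1 < k → (nextNumerator n P).coeff k = 0 := by
      intro k hk
      obtain ⟨k, rfl⟩ : ∃ j, k = j + 1 := ⟨k - 1, by omega⟩
      rw [coeff_nextNumerator_succ, hdeg k (by omega), hdeg (k + 2) (by omega)]
      simp
    refine ⟨nextNumerator n P, ?_, hdeg', ?_, ?_⟩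
    · intro x
      rw [iteratedDeriv_succ, funext hP]
      exact (hasDerivAt_div_one_add_sq_pow n P x).deriv
    · intro k
      have hfac : (4 : ℝ) ^ (n + 1) * (Nat.factorial (n + 1 + 2) : ℝ) =
          4 * (n + 3) * (4 ^ n * (Nat.factorial (n + 2) : ℝ)) := by
        rw [show n + 1 + 2 = (n + 2) + 1 by ring, Nat.factorial_succ]
        push_cast
        ring
      rw [hfac]
      set A : ℝ := 4 ^ n * (Nat.factorial (n + 2) : ℝ) with hA
      have hA0 : 0 ≤ A := by positivity
      have hn0 : (0 : ℝ) ≤ n := n.cast_nonneg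
      rcases lt_or_ge (n + 1) k with hk | hk
      · rw [hdeg' k hk, abs_zero]
        positivity
      · cases k with
        | zero =>
          rw [coeff_nextNumerator_zero]
          nlinarith [hbd 1, mul_nonneg hn0 hA0]
        | succ k =>
          have hkn : (k : ℝ) ≤ n := by exact_mod_cast (by omega : k ≤ n)
          rw [coeff_nextNumerator_succ]
          calc |((k : ℝ) + 2) * P.coeff (k + 2) + ((k : ℝ) - 2 * (n + 1)) * P.coeff k|
              ≤ ((k : ℝ) + 2) * |P.coeff (k + 2)| + (2 * (n + 1) - (k : ℝ)) * |P.coeff k| := by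
                refine (abs_add_le _ _).trans_eq ?_
                rw [abs_mul, abs_mul, abs_of_nonneg (by positivity : (0 : ℝ) ≤ (k : ℝ) + 2),
                  abs_of_nonpos (by linarith : (k : ℝ) - 2 * (n + 1) ≤ 0)]
                ring
            _ ≤ ((k : ℝ) + 2) * A + (2 * (n + 1) - (k : ℝ)) * A :=
                add_le_add (mul_le_mul_of_nonneg_left (hbd _) (by positivity))
                  (mul_le_mul_of_nonneg_left (hbd _) (by linarith))
            _ ≤ 4 * (n + 3) * A := by nlinarith [mul_nonneg hn0 hA0]
    · intro k hk
      cases k with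
      | zero =>
        rw [coeff_nextNumerator_zero]
        exact hodd 1 (by simpa using hk)
      | succ k =>
        rw [coeff_nextNumerator_succ, hodd k (by grind), hodd (k + 2) (by grind)]
        simp

/-- **Derivatives of `φ(x) = (1+x²)⁻¹`** (Lemma 5.2).
For every `n ∈ ℕ` there are coefficients `a_k^n`, `0 ≤ k ≤ n`, with
`φ^{(n)}(x) = (1+x²)^{-(n+1)} Σ_{k=0}^n a_k^n x^k`, `|a_k^n| ≤ 4ⁿ (n+2)!`, and `a_k^n = 0`
whenever `n + k` is odd. -/
theorem iteratedDeriv_one_add_sq_inv (n : ℕ) :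
    ∃ a : ℕ → ℝ,
      (∀ x : ℝ, iteratedDeriv n (fun z : ℝ => (1 + z ^ 2)⁻¹) x =
        ((1 + x ^ 2) ^ (n + 1))⁻¹ * ∑ k ∈ Finset.range (n + 1), a k * x ^ k) ∧
      (∀ k ≤ n, |a k| ≤ 4 ^ n * (Nat.factorial (n + 2) : ℝ)) ∧
      (∀ k ≤ n, Odd (n + k) → a k = 0) := by
  obtain ⟨P, hP, hdeg, hbd, hodd⟩ := exists_numerator n
  refine ⟨P.coeff, fun x => ?_, fun k _ => hbd k, fun k _ => hodd k⟩
  have hnat : P.natDegree < n + 1 :=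
    Nat.lt_succ_of_le (Polynomial.natDegree_le_iff_coeff_eq_zero.mpr hdeg)
  rw [hP x, Polynomial.eval_eq_sum_range' hnat]
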